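/- Let k ≥ 2, s = (s_0,…,s_{k−1})ᵀ ∈ ℝ^k, and γ > 0. Then the following are equivalent: (iii) there exists a vector p = (p_1,…,p_k) ∈ ℝ^k solving the rank-one quadratic system associated with s and γ; (iv) Σ_{m=0}^{k−1} s_m T_m(x) ≥ γ for all x ∈ [−1,1]. -/

import Mathlib

/-!
The equivalence is a real-coefficient version of the Fejér–Riesz theorem. For `z = exp (iθ)` and a
real polynomial `p` with coefficients `p 0, …, p (k - 1)`,
`|p z|² = ∑ p_i² + ∑_{m ≥ 1} (2 ∑ p_i p_{i+m}) cos (m θ)`, and `T_m (cos θ) = cos (m θ)`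
(`normSq_aeval_eq`). Hence a solution of the system makes `∑ s_m T_m - γ` a squared modulus, which
is nonnegative.

Conversely, let `f = ∑ s_m T_m - γ` be nonnegative on `[-1, 1]`. By induction on the degree,
`f (Re z) = |p z|²` on the unit circle for a real `p` with `deg p ≤ deg f` (`circleSquare_of_nonneg`).
The factors of `f` are treated one at a time:
* a real root `r` with `1 ≤ |r|` gives a factor `|r| ∓ x`, equal to `|a + b z|²` for suitable
  real `a`, `b`;
* a real root in `(-1, 1)` is a local minimum of `f`, hence a double root; together with the pairs of
  conjugate non-real roots it gives a factor `|x - w|²`, and writing `w = (u + u⁻¹) / 2` one has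
  `|Re z - w|² = |(z - u) (z - conj u) / (2 |u|)|²`.

Comparing coefficients, using that the `T_m` are linearly independent, gives the system.
-/

/-- The `m`-th Chebyshev polynomial of the first kind. -/
noncomputable def chebT : ℕ → ℝ → ℝ
  | 0, _ => 1
  | 1, x => x
  | n + 2, x => 2 * x * chebT (n + 1) x - chebT n x

/-- `p = (p 0, …, p (k−1))` solves the rank-one quadratic system associated with `s` and `γ`:
`Σ_{i} p_i² = s_0 − γ` and `2 Σ_i p_i p_{i+m} = s_m` for `m = 1, …, k−1`. -/
def RankOneSystem (k : ℕ) (s : ℕ → ℝ) (γ : ℝ) (p : ℕ → ℝ) : Prop :=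
  (∑ i ∈ Finset.range k, (p i) ^ 2 = s 0 - γ) ∧
  ∀ m ∈ Finset.Icc 1 (k - 1), 2 * ∑ i ∈ Finset.range (k - m), p i * p (i + m) = s m

open Polynomial

/-! ### Chebyshev polynomials -/

lemma chebT_eq_eval (m : ℕ) (x : ℝ) : chebT m x = (Chebyshev.T ℝ m).eval x := by
  induction m using Nat.twoStepInduction with
  | zero => simp [chebT]
  | one => simp [chebT]
  | more n ih1 ih2 =>
    have h := Chebyshev.T_add_two ℝ (n : ℤ)
    push_cast at ih2 ⊢
    rw [h, chebT, ih1, ih2]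
    simp

lemma chebT_cos (m : ℕ) (θ : ℝ) : chebT m (Real.cos θ) = Real.cos (m * θ) := by
  rw [chebT_eq_eval, Chebyshev.T_real_cos]
  simp

/-- Linear independence of the Chebyshev polynomials, viewed as functions on `[-1, 1]`. -/
lemma coeff_eq_zero_of_chebT (k : ℕ) (d : ℕ → ℝ)
    (h : ∀ θ : ℝ, ∑ m ∈ Finset.range k, d m * chebT m (Real.cos θ) = 0) :
    ∀ m < k, d m = 0 := by
  let S : Polynomial.Sequence ℝ :=
    ⟨fun n => Chebyshev.T ℝ n, fun n => by rw [Chebyshev.degree_T]; simp⟩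
  have hS : LinearIndependent ℝ (fun n => S n) := S.linearIndependent
  have h0 : ∑ m ∈ Finset.range k, d m • S m = 0 := by
    apply Polynomial.eq_zero_of_infinite_isRoot
    refine (Set.Icc_infinite (show (-1 : ℝ) < 1 by norm_num)).mono ?_
    intro x hx
    have h1 := h (Real.arccos x)
    rw [Real.cos_arccos hx.1 hx.2] at h1
    simp only [Set.mem_setOf_eq, IsRoot.def, eval_finsetSum, eval_smul, smul_eq_mul]
    simpa only [chebT_eq_eval] using h1
  intro m hm
  exact linearIndependent_iff'.1 hS _ _ h0 m (Finset.mem_range.2 hm)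

/-! ### The squared modulus of a polynomial on the unit circle -/

/-- The coefficients of the cosine expansion of `|∑ p_i z^i|²`. -/
noncomputable def autoCorr (k : ℕ) (p : ℕ → ℝ) (m : ℕ) : ℝ :=
  if m = 0 then ∑ i ∈ Finset.range k, p i ^ 2
  else 2 * ∑ i ∈ Finset.range (k - m), p i * p (i + m)

lemma cos_sin_sq_eq (p : ℕ → ℝ) (θ : ℝ) (k : ℕ) :
    (∑ i ∈ Finset.range k, p i * Real.cos (i * θ)) ^ 2
      + (∑ i ∈ Finset.range k, p i * Real.sin (i * θ)) ^ 2
    = ∑ i ∈ Finset.range k, p i ^ 2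
      + ∑ m ∈ Finset.range k, 2 * (∑ i ∈ Finset.range (k - (m + 1)), p i * p (i + (m + 1)))
        * Real.cos ((m + 1 : ℕ) * θ) := by
  induction k with
  | zero => simp
  | succ k ih =>
    have e1 : ∑ m ∈ Finset.range (k + 1),
          2 * (∑ i ∈ Finset.range (k + 1 - (m + 1)), p i * p (i + (m + 1)))
            * Real.cos ((m + 1 : ℕ) * θ)
        = ∑ m ∈ Finset.range k, 2 * (∑ i ∈ Finset.range (k - (m + 1)), p i * p (i + (m + 1)))
            * Real.cos ((m + 1 : ℕ) * θ)
          + ∑ m ∈ Finset.range k, 2 * (p (k - 1 - m) * p k)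
            * Real.cos ((m + 1 : ℕ) * θ) := by
      rw [Finset.sum_range_succ, ← Finset.sum_add_distrib]
      simp only [Nat.sub_self, Finset.range_zero, Finset.sum_empty, mul_zero, zero_mul, add_zero]
      refine Finset.sum_congr rfl fun m hm => ?_
      have hm' := Finset.mem_range.1 hm
      have h1 : k + 1 - (m + 1) = (k - (m + 1)) + 1 := by omega
      have h2 : k - (m + 1) + (m + 1) = k := by omega
      have h3 : k - (m + 1) = k - 1 - m := by omega
      rw [h1, Finset.sum_range_succ, h2, h3]
      ring
    have e2 : ∑ m ∈ Finset.range k, 2 * (p (k - 1 - m) * p k) * Real.cos ((m + 1 : ℕ) * θ)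
        = ∑ i ∈ Finset.range k, 2 * (p i * p k) *
            (Real.cos (k * θ) * Real.cos (i * θ) + Real.sin (k * θ) * Real.sin (i * θ)) := by
      rw [← Finset.sum_range_reflect]
      refine Finset.sum_congr rfl fun i hi => ?_
      have hi' := Finset.mem_range.1 hi
      have h1 : k - 1 - (k - 1 - i) = i := by omega
      have h2 : k - 1 - i + 1 = k - i := by omega
      rw [h1, h2, Nat.cast_sub hi'.le, sub_mul, Real.cos_sub]
    have e3 : ∑ i ∈ Finset.range k, 2 * (p i * p k) *
            (Real.cos (k * θ) * Real.cos (i * θ) + Real.sin (k * θ) * Real.sin (i * θ))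
        = 2 * p k * Real.cos (k * θ) * (∑ i ∈ Finset.range k, p i * Real.cos (i * θ))
          + 2 * p k * Real.sin (k * θ) * (∑ i ∈ Finset.range k, p i * Real.sin (i * θ)) := by
      rw [Finset.mul_sum, Finset.mul_sum, ← Finset.sum_add_distrib]
      exact Finset.sum_congr rfl fun i _ => by ring
    rw [e1, e2, e3, Finset.sum_range_succ, Finset.sum_range_succ, Finset.sum_range_succ]
    linear_combination ih + p k ^ 2 * Real.sin_sq_add_cos_sq (k * θ)

lemma cos_sin_sq_eq_autoCorr (p : ℕ → ℝ) (θ : ℝ) (k : ℕ) :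
    (∑ i ∈ Finset.range k, p i * Real.cos (i * θ)) ^ 2
      + (∑ i ∈ Finset.range k, p i * Real.sin (i * θ)) ^ 2
    = ∑ m ∈ Finset.range k, autoCorr k p m * chebT m (Real.cos θ) := by
  rw [cos_sin_sq_eq]
  cases k with
  | zero => simp
  | succ k =>
    rw [Finset.sum_range_succ' (fun m => autoCorr (k + 1) p m * chebT m (Real.cos θ)),
      Finset.sum_range_succ (fun m => 2 * _ * _)]
    simp [autoCorr, chebT_cos, add_comm]

lemma normSq_aeval_eq (p : ℝ[X]) (k : ℕ) (hp : p.natDegree < k) (θ : ℝ) :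
    Complex.normSq (aeval (Complex.exp (θ * Complex.I)) p)
      = ∑ m ∈ Finset.range k, autoCorr k p.coeff m * chebT m (Real.cos θ) := by
  rw [← cos_sin_sq_eq_autoCorr, aeval_eq_sum_range' hp, Complex.normSq_apply, ← sq, ← sq]
  have key : ∀ i : ℕ, p.coeff i • Complex.exp (θ * Complex.I) ^ i
      = ((p.coeff i * Real.cos (i * θ) : ℝ) : ℂ)
        + ((p.coeff i * Real.sin (i * θ) : ℝ) : ℂ) * Complex.I := by
    intro i
    rw [← Complex.exp_nat_mul, ← mul_assoc, Complex.exp_mul_I, Complex.real_smul]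
    push_cast
    ring
  rw [Complex.re_sum, Complex.im_sum]
  simp only [key]
  congr 2
  · exact Finset.sum_congr rfl fun i _ => by
      simp [-Complex.ofReal_mul, -Complex.ofReal_cos, -Complex.ofReal_sin]
  · exact Finset.sum_congr rfl fun i _ => by
      simp [-Complex.ofReal_mul, -Complex.ofReal_cos, -Complex.ofReal_sin]

/-! ### Fejér–Riesz factorization -/

/-- `f (Re z)` is the squared modulus of a real polynomial in `z`, of degree at most that of `f`,
on the unit circle. -/
def CircleSquare (f : ℝ[X]) : Prop :=
  ∃ p : ℝ[X], p.natDegree ≤ f.natDegree ∧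
    ∀ z : ℂ, Complex.normSq z = 1 → f.eval z.re = Complex.normSq (aeval z p)

lemma CircleSquare.mul {f g : ℝ[X]} (hf : CircleSquare f) (hg : CircleSquare g)
    (hf0 : f ≠ 0) (hg0 : g ≠ 0) : CircleSquare (f * g) := by
  obtain ⟨p, hp, hp'⟩ := hf
  obtain ⟨q, hq, hq'⟩ := hg
  refine ⟨p * q, ?_, fun z hz => ?_⟩
  · rw [natDegree_mul hf0 hg0]
    exact natDegree_mul_le.trans (add_le_add hp hq)
  · rw [eval_mul, hp' z hz, hq' z hz, map_mul, Complex.normSq_mul]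

lemma circleSquare_C {c : ℝ} (hc : 0 ≤ c) : CircleSquare (C c) := by
  refine ⟨C (Real.sqrt c), by simp, fun z _ => ?_⟩
  simp [Real.mul_self_sqrt hc]

/-- With `ε = ± 1`, the coefficients of `a + b z` solve `a² + b² = r`, `2 a b = ε`. -/
lemma circleSquare_linear {r ε : ℝ} (hr : 1 ≤ r) (hε : ε ^ 2 = 1) :
    CircleSquare (C ε * X + C r) := by
  have hε0 : ε ≠ 0 := by rintro rfl; norm_num at hε
  have hs := Real.sq_sqrt (show 0 ≤ r + 1 by linarith)
  have ht := Real.sq_sqrt (show 0 ≤ r - 1 by linarith)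
  set S := Real.sqrt (r + 1)
  set T := Real.sqrt (r - 1)
  refine ⟨C (ε * (S - T) / 2) * X + C ((S + T) / 2), ?_, fun z hz => ?_⟩
  · rw [natDegree_linear hε0]
    exact natDegree_linear_le
  · rw [Complex.normSq_apply] at hz
    simp only [eval_add, eval_mul, eval_C, eval_X, map_add, map_mul, aeval_C, aeval_X,
      Complex.coe_algebraMap, Complex.normSq_apply, Complex.add_re, Complex.add_im,
      Complex.re_ofReal_mul, Complex.im_ofReal_mul, Complex.ofReal_re, Complex.ofReal_im]
    linear_combination (-(S - T) ^ 2 / 4) * (ε ^ 2 * hz + hε)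
      - (1 / 2 + ε * z.re / 2) * hs - (1 / 2 - ε * z.re / 2) * ht

lemma circleSquare_quadratic (w : ℂ) :
    CircleSquare (X ^ 2 - C (2 * w.re) * X + C (‖w‖ ^ 2)) := by
  obtain ⟨v, hv⟩ := IsAlgClosed.exists_pow_nat_eq (w ^ 2 - 1) (n := 2) (by norm_num)
  -- `u` is a root of `u² - 2 w u + 1`, so that `w = (u + u⁻¹) / 2`.
  obtain ⟨u, hu⟩ : ∃ u : ℂ, 2 * u * w = u ^ 2 + 1 :=
    ⟨w + v, by linear_combination -hv⟩
  have hu0 : u ≠ 0 := by rintro rfl; norm_num at hu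
  have hn : (‖u‖ : ℝ) ≠ 0 := norm_ne_zero_iff.2 hu0
  refine ⟨C (1 / (2 * ‖u‖)) * (X ^ 2 - C (2 * u.re) * X + C (‖u‖ ^ 2)), ?_, fun z hz => ?_⟩
  · have h1 : (X ^ 2 - C (2 * w.re) * X + C (‖w‖ ^ 2)).natDegree = 2 := by compute_degree!
    rw [h1]
    compute_degree
  · have hzz : z * (starRingEnd ℂ) z = 1 := by rw [Complex.mul_conj, hz]; simp
    have hzre : (2 * z.re : ℂ) = z + (starRingEnd ℂ) z := by rw [Complex.add_conj]; push_cast; ring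
    have h1 : (X ^ 2 - C (2 * w.re) * X + C (‖w‖ ^ 2)).eval z.re
        = Complex.normSq ((z.re : ℂ) - w) := by
      simp only [eval_add, eval_sub, eval_mul, eval_pow, eval_X, eval_C, ← Complex.normSq_eq_norm_sq,
        Complex.normSq_apply, Complex.sub_re, Complex.sub_im, Complex.ofReal_re, Complex.ofReal_im]
      ring
    have h2 : aeval z (X ^ 2 - C (2 * u.re) * X + C (‖u‖ ^ 2))
        = (z - u) * (z - (starRingEnd ℂ) u) := by
      have e1 : ((2 * u.re : ℝ) : ℂ) = u + (starRingEnd ℂ) u := (Complex.add_conj u).symm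
      have e2 : ((‖u‖ ^ 2 : ℝ) : ℂ) = u * (starRingEnd ℂ) u := by
        rw [Complex.mul_conj, Complex.normSq_eq_norm_sq]
      simp only [map_add, map_sub, map_mul (aeval z), map_pow (aeval z), aeval_X, aeval_C,
        Complex.coe_algebraMap, e1, e2]
      ring
    have h3 : 2 * u * ((z.re : ℂ) - w) = (z - u) * (u - (starRingEnd ℂ) z) := by
      linear_combination u * hzre - hu + hzz
    have h4 := congrArg Complex.normSq h3
    have h5 : Complex.normSq (u - (starRingEnd ℂ) z) = Complex.normSq (z - (starRingEnd ℂ) u) := by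
      rw [← Complex.normSq_conj, map_sub, Complex.conj_conj, ← Complex.normSq_neg, neg_sub]
    have h6 : Complex.normSq (2 : ℂ) = 4 := by norm_num [Complex.normSq_apply]
    simp only [Complex.normSq_mul, h5, h6] at h4
    rw [h1, map_mul (aeval z), h2, aeval_C, Complex.coe_algebraMap, Complex.normSq_mul,
      Complex.normSq_mul, ← h4, Complex.normSq_ofReal, Complex.normSq_eq_norm_sq u]
    field_simp
    norm_num

/-- The quotient of a nonnegative polynomial by one positive off a single point is nonnegative,
by continuity. -/
lemma nonneg_of_mul_nonneg_off {h g : ℝ[X]} (r : ℝ)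
    (hh : ∀ x ∈ Set.Ioo (-1 : ℝ) 1, x ≠ r → 0 < h.eval x)
    (hf : ∀ x ∈ Set.Icc (-1 : ℝ) 1, 0 ≤ (h * g).eval x) :
    ∀ x ∈ Set.Icc (-1 : ℝ) 1, 0 ≤ g.eval x := by
  have hcl : IsClosed {x : ℝ | 0 ≤ g.eval x} := isClosed_le continuous_const g.continuous
  have h1 : Set.Ioo (-1 : ℝ) 1 ∩ {r}ᶜ ⊆ {x : ℝ | 0 ≤ g.eval x} := by
    rintro x ⟨hx, hxr⟩
    have h2 := hf x (Set.Ioo_subset_Icc_self hx)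
    rw [eval_mul] at h2
    exact nonneg_of_mul_nonneg_right h2 (hh x hx hxr)
  have h3 : Set.Ioo (-1 : ℝ) 1 ⊆ {x : ℝ | 0 ≤ g.eval x} :=
    ((dense_compl_singleton r).open_subset_closure_inter isOpen_Ioo).trans
      (closure_minimal h1 hcl)
  have h4 := closure_minimal h3 hcl
  rw [closure_Ioo (by norm_num)] at h4
  exact h4

/-- Real Fejér–Riesz theorem for even trigonometric polynomials. -/
lemma circleSquare_of_nonneg (n : ℕ) : ∀ f : ℝ[X], f.natDegree = n →
    (∀ x ∈ Set.Icc (-1 : ℝ) 1, 0 ≤ f.eval x) → CircleSquare f := by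
  induction n using Nat.strong_induction_on with
  | _ n ih =>
  intro f hn hf
  -- Splitting off a factor of positive degree that is itself a square on the circle.
  have step : ∀ (h g : ℝ[X]) (r : ℝ), f = h * g → f ≠ 0 → 0 < h.natDegree → CircleSquare h →
      (∀ x ∈ Set.Ioo (-1 : ℝ) 1, x ≠ r → 0 < h.eval x) → CircleSquare f := by
    intro h g r hfg hf0 hd hh hpos
    have hh0 : h ≠ 0 := by rintro rfl; simp at hd
    have hg0 : g ≠ 0 := by rintro rfl; simp [hfg] at hf0
    rw [hfg] at hf hn ⊢
    rw [natDegree_mul hh0 hg0] at hn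
    exact hh.mul (ih _ (by omega) g rfl (nonneg_of_mul_nonneg_off r hpos hf)) hh0 hg0
  by_cases hn0 : f.natDegree = 0
  · obtain ⟨c, hc⟩ : ∃ c, f = C c := ⟨_, eq_C_of_natDegree_eq_zero hn0⟩
    subst hc
    exact circleSquare_C (by simpa using hf 0 (by norm_num))
  have hf0 : f ≠ 0 := by rintro rfl; simp at hn0
  obtain ⟨w, hw⟩ : ∃ w : ℂ, aeval w f = 0 :=
    IsAlgClosed.exists_aeval_eq_zero ℂ f (fun h => hn0 (natDegree_eq_of_degree_eq_some h))
  have hquad : ∀ (w : ℂ) (g : ℝ[X]), f = (X ^ 2 - C (2 * w.re) * X + C (‖w‖ ^ 2)) * g →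
      CircleSquare f := by
    intro w g hg
    have h1 : (X ^ 2 - C (2 * w.re) * X + C (‖w‖ ^ 2)).natDegree = 2 := by compute_degree!
    refine step _ g w.re hg hf0 (by omega) (circleSquare_quadratic w) fun x _ hx => ?_
    have h2 : 0 < (x - w.re) ^ 2 := by have := sub_ne_zero.2 hx; positivity
    simp only [eval_add, eval_sub, eval_mul, eval_pow, eval_X, eval_C, ← Complex.normSq_eq_norm_sq,
      Complex.normSq_apply]
    nlinarith [mul_self_nonneg w.im]
  by_cases him : w.im = 0
  swap
  · obtain ⟨g, hg⟩ := f.quadratic_dvd_of_aeval_eq_zero_im_ne_zero hw him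
    exact hquad w g hg
  obtain ⟨r, rfl⟩ : ∃ r : ℝ, w = r := ⟨w.re, Complex.ext (by simp) (by simp [him])⟩
  have hr : f.IsRoot r := by
    have h1 : aeval (r : ℂ) f = ((f.eval r : ℝ) : ℂ) := by
      simpa using aeval_algebraMap_apply ℂ r f
    rw [h1] at hw
    exact_mod_cast hw
  obtain ⟨g, hg⟩ := dvd_iff_isRoot.2 hr
  rcases le_or_gt 1 r with h1 | h1
  · refine step (C (-1) * X + C r) (-g) r ?_ hf0 ?_ (circleSquare_linear h1 (by norm_num)) ?_
    · rw [hg]; simp only [map_neg, map_one]; ring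
    · rw [natDegree_linear (by norm_num)]; norm_num
    · intro x hx _
      simp only [eval_add, eval_mul, eval_C, eval_X]
      linarith [hx.2]
  rcases le_or_gt r (-1) with h2 | h2
  · refine step (C 1 * X + C (-r)) g r ?_ hf0 ?_
      (circleSquare_linear (by linarith) (by norm_num)) ?_
    · rw [hg]; simp only [map_neg, map_one]; ring
    · rw [natDegree_linear (by norm_num)]; norm_num
    · intro x hx _
      simp only [eval_add, eval_mul, eval_C, eval_X]
      linarith [hx.1]
  · -- An interior root is a local minimum, so the derivative vanishes there too.
    have hmin : IsLocalMin (fun x => f.eval x) r := by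
      filter_upwards [Ioo_mem_nhds h2 h1] with x hx
      rw [hr.eq_zero]
      exact hf x (Set.Ioo_subset_Icc_self hx)
    have hd := hmin.deriv_eq_zero
    rw [Polynomial.deriv, hg] at hd
    have hgr : g.IsRoot r := by simpa [derivative_mul] using hd
    obtain ⟨q, hq⟩ := dvd_iff_isRoot.2 hgr
    refine hquad r q ?_
    rw [hg, hq]
    simp only [Complex.ofReal_re, Complex.norm_real, Real.norm_eq_abs, sq_abs, map_mul, map_pow,
      map_ofNat]
    ring

/-! ### The equivalence -/

lemma rankOneSystem_iff (k : ℕ) (hk : 2 ≤ k) (s : ℕ → ℝ) (γ : ℝ) (p : ℕ → ℝ) :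
    RankOneSystem k s γ p ↔
      ∀ m < k, s m - (if m = 0 then γ else 0) - autoCorr k p m = 0 := by
  constructor
  · rintro ⟨h0, h1⟩ m hm
    by_cases hm0 : m = 0
    · subst hm0; simp [autoCorr, h0]
    · have := h1 m (Finset.mem_Icc.2 ⟨by omega, by omega⟩)
      simp [autoCorr, hm0, this]
  · intro h
    refine ⟨?_, fun m hm => ?_⟩
    · have := h 0 (by omega)
      simp only [autoCorr, if_true] at this
      linarith
    · have hm' := Finset.mem_Icc.1 hm
      have := h m (by omega)
      have hm0 : m ≠ 0 := by omega
      simp only [autoCorr, hm0, if_false] at this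
      linarith

lemma sum_sub_chebT (k : ℕ) (hk : 2 ≤ k) (s c : ℕ → ℝ) (γ x : ℝ) :
    ∑ m ∈ Finset.range k, (s m - (if m = 0 then γ else 0) - c m) * chebT m x
      = ∑ m ∈ Finset.range k, s m * chebT m x - γ - ∑ m ∈ Finset.range k, c m * chebT m x := by
  have h0 : 0 < k := by omega
  simp [sub_mul, Finset.sum_sub_distrib, ite_mul, h0, chebT]

/-- (iii) ⇔ (iv): the rank-one quadratic system associated with `s` and `γ > 0` has a real
solution if and only if `Σ_{m=0}^{k−1} s_m T_m(x) ≥ γ` for all `x ∈ [−1,1]`. -/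
theorem stmt5 (k : ℕ) (hk : 2 ≤ k) (s : ℕ → ℝ) (γ : ℝ) (hγ : 0 < γ) :
    (∃ p : ℕ → ℝ, RankOneSystem k s γ p) ↔
      ∀ x ∈ Set.Icc (-1 : ℝ) 1, γ ≤ ∑ m ∈ Finset.range k, s m * chebT m x := by
  constructor
  · rintro ⟨p, hp⟩ x hx
    rw [rankOneSystem_iff k hk] at hp
    have h1 := sum_sub_chebT k hk s (autoCorr k p) γ x
    rw [Finset.sum_eq_zero fun m hm => by rw [hp m (Finset.mem_range.1 hm), zero_mul]] at h1
    have h2 := cos_sin_sq_eq_autoCorr p (Real.arccos x) k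
    rw [Real.cos_arccos hx.1 hx.2] at h2
    nlinarith [sq_nonneg (∑ i ∈ Finset.range k, p i * Real.cos (i * Real.arccos x)),
      sq_nonneg (∑ i ∈ Finset.range k, p i * Real.sin (i * Real.arccos x))]
  · intro h
    set f : ℝ[X] := ∑ m ∈ Finset.range k, C (s m) * Chebyshev.T ℝ m - C γ with hfdef
    have hfe : ∀ x, f.eval x = ∑ m ∈ Finset.range k, s m * chebT m x - γ := by
      intro x
      simp [hfdef, eval_finsetSum, chebT_eq_eval]
    have hfd : f.natDegree < k := by
      have h1 : f.natDegree ≤ k - 1 := by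
        refine (natDegree_sub_le_of_le (natDegree_sum_le_of_forall_le _ _ fun m hm => ?_)
          (natDegree_C γ).le).trans (max_le le_rfl (Nat.zero_le _))
        refine (natDegree_C_mul_le _ _).trans ?_
        rw [Chebyshev.natDegree_T]
        have := Finset.mem_range.1 hm
        simp only [Int.natAbs_natCast]
        omega
      omega
    obtain ⟨p, hpd, hp⟩ := circleSquare_of_nonneg _ f rfl fun x hx => by
      rw [hfe]; linarith [h x hx]
    refine ⟨p.coeff, (rankOneSystem_iff k hk s γ _).2 (coeff_eq_zero_of_chebT k _ fun θ => ?_)⟩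
    have h1 := hp (Complex.exp (θ * Complex.I)) (by
      rw [Complex.normSq_eq_norm_sq, Complex.norm_exp_ofReal_mul_I, one_pow])
    rw [Complex.exp_ofReal_mul_I_re, hfe, normSq_aeval_eq p k (by omega)] at h1
    rw [sum_sub_chebT k hk]
    linarith
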